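/- Every Bernstein-orientable graph G is UFP: it admits a recoverable configuration C = (R,B) in which both the red oriented graph R and the blue oriented graph B have maximum out-degree at most 1. -/

import Mathlib

variable {α : Type*}

/-- An oriented graph: a finite set of arcs with no loops and at most one
arc between any pair of vertices. -/
def Oriented (D : Finset (α × α)) : Prop :=
  ∀ a ∈ D, a.1 ≠ a.2 ∧ (a.2, a.1) ∉ D

/-- Out-degree of a vertex in a finite digraph. -/
def outDeg [DecidableEq α] (D : Finset (α × α)) (v : α) : ℕ :=
  (D.filter fun a => a.1 = v).card

/-- In-degree of a vertex in a finite digraph. -/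
def inDeg [DecidableEq α] (D : Finset (α × α)) (v : α) : ℕ :=
  (D.filter fun a => a.2 = v).card

/-- A digraph has a directed cycle iff some vertex reaches itself by a
nonempty directed walk. -/
def HasDirCycle (D : Finset (α × α)) : Prop :=
  ∃ v : α, Relation.TransGen (fun a b => (a, b) ∈ D) v v

/-- Two arcs have the same direction with respect to a shared vertex `v`:
both leave `v` or both enter `v`. -/
def SameDir (e f : α × α) (v : α) : Prop :=
  (e.1 = v ∧ f.1 = v) ∨ (e.2 = v ∧ f.2 = v)

/-- An alternating closed trail: a cyclic sequence of `2m` distinct arcs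
`e 0, e 1, …` (indices mod `2m`) such that consecutive arcs share a vertex
`v i` at which they have the same direction, with `v i ≠ v (i+1)`. -/
def HasAltTrail (D : Finset (α × α)) : Prop :=
  ∃ m : ℕ, 0 < m ∧ ∃ (e : ZMod (2 * m) → α × α) (v : ZMod (2 * m) → α),
    Function.Injective e ∧ (∀ i, e i ∈ D) ∧
    (∀ i, SameDir (e i) (e (i + 1)) (v i)) ∧ (∀ i, v i ≠ v (i + 1))

/-- A Bernstein oriented graph: no directed cycles and no alternating
closed trails. -/
def Bernstein (D : Finset (α × α)) : Prop :=
  Oriented D ∧ ¬ HasDirCycle D ∧ ¬ HasAltTrail D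

/-- `D` is an orientation of the simple graph `G`: every arc of `D` is an
edge of `G`, and every edge of `G` carries exactly one of the two possible
arcs. -/
def IsOrientation (G : SimpleGraph α) (D : Finset (α × α)) : Prop :=
  (∀ a ∈ D, G.Adj a.1 a.2) ∧ ∀ x y : α, G.Adj x y → ((x, y) ∈ D ↔ (y, x) ∉ D)

/-- In an oriented graph, if every arc of a nonempty set `F` of arcs has a companion in `F` with the
same tail and a companion with the same head, then there is an alternating closed trail. Without
such trails some arc of `F` is determined in `F` by its tail or by its head. -/
theorem exists_arc_determined_by_endpoint {D F : Finset (α × α)} (hD : Oriented D)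
    (hT : ¬ HasAltTrail D) (hFD : F ⊆ D) (hF : F.Nonempty) :
    ∃ e ∈ F, (∀ e' ∈ F, e'.1 = e.1 → e' = e) ∨ (∀ e' ∈ F, e'.2 = e.2 → e' = e) := by
  by_contra! hcon
  apply hT
  choose! t htF ht1 hte h hhF hh2 hhe using fun e he => (by
    obtain ⟨⟨t, htF, ht1, hte⟩, h, hhF, hh2, hhe⟩ := hcon e he
    exact ⟨t, htF, ht1, hte, h, hhF, hh2, hhe⟩ :
      ∃ t ∈ F, t.1 = e.1 ∧ t ≠ e ∧ ∃ h ∈ F, h.2 = e.2 ∧ h ≠ e)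
  obtain ⟨e₀, he₀⟩ := hF
  let a : ℕ → α × α := fun n => Nat.rec e₀ (fun k e => if k % 2 = 0 then h e else t e) n
  have ha_succ (k : ℕ) : a (k + 1) = if k % 2 = 0 then h (a k) else t (a k) := rfl
  have haF (k : ℕ) : a k ∈ F := by
    induction k with
    | zero => exact he₀
    | succ k ih =>
      rw [ha_succ]
      split_ifs
      exacts [hhF _ ih, htF _ ih]
  have ha_ne (k : ℕ) : a (k + 1) ≠ a k := by
    rw [ha_succ]
    split_ifs
    exacts [hhe _ (haF k), hte _ (haF k)]
  let y : ℕ → α := fun k => if k % 2 = 0 then (a k).2 else (a k).1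
  have hy_even (k : ℕ) (hk : k % 2 = 0) : y k = (a k).2 ∧ y k = (a (k + 1)).2 := by
    simp [y, hk, ha_succ, hh2 _ (haF k)]
  have hy_odd (k : ℕ) (hk : k % 2 = 1) : y k = (a k).1 ∧ y k = (a (k + 1)).1 := by
    simp [y, hk, ha_succ, ht1 _ (haF k)]
  have hloop (k : ℕ) : (a k).1 ≠ (a k).2 := (hD _ (hFD (haF k))).1
  have hy_ne (k : ℕ) : y k ≠ y (k + 1) := by
    have := hloop (k + 1)
    rcases Nat.mod_two_eq_zero_or_one k with hk | hk
    · rw [(hy_even k hk).2, (hy_odd (k + 1) (by lia)).1]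
      exact this.symm
    · rw [(hy_odd k hk).2, (hy_even (k + 1) (by lia)).1]
      exact this
  have hrep : ∃ m, 0 < m ∧ ∃ i, y i = y (i + 2 * m) := by
    classical
    obtain ⟨i, -, j, -, hij, heq⟩ := Set.infinite_univ.exists_ne_map_eq_of_mapsTo
      (f := fun k => y (2 * k)) (t := (F.image Prod.snd : Set α))
      (fun k _ => by
        change y (2 * k) ∈ _
        rw [(hy_even (2 * k) (by lia)).1]
        exact Finset.mem_coe.2 (Finset.mem_image_of_mem _ (haF _))) (Finset.finite_toSet _)
    rcases lt_or_gt_of_ne hij with hlt | hlt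
    · exact ⟨j - i, by lia, 2 * i, by rw [show 2 * i + 2 * (j - i) = 2 * j by lia]; exact heq⟩
    · exact ⟨i - j, by lia, 2 * j, by rw [show 2 * j + 2 * (i - j) = 2 * i by lia]; exact heq.symm⟩
  classical
  obtain ⟨hm, i, hi⟩ := Nat.find_spec hrep
  have hmin (k n : ℕ) (hn : 0 < n) (hn' : n < Nat.find hrep) : y k ≠ y (k + 2 * n) :=
    fun hk => Nat.find_min hrep hn' ⟨hn, k, hk⟩
  generalize Nat.find hrep = m at hm hi hmin
  have hinj (k l : ℕ) (hkl : k < l) (hlk : l < k + 2 * m) : a k ≠ a l := by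
    intro hakl
    rcases Nat.even_or_odd' (l - k) with ⟨c, hc | hc⟩
    · refine hmin k c (by lia) (by lia) ?_
      rw [← hc, Nat.add_sub_cancel' hkl.le]
      have : k % 2 = l % 2 := by lia
      simp only [y, this, hakl]
    · rcases Nat.eq_zero_or_pos c with rfl | hc0
      · obtain rfl : l = k + 1 := by lia
        exact ha_ne k hakl.symm
      · refine hmin k c hc0 (by lia) ?_
        have hl : l = k + 2 * c + 1 := by lia
        rw [hl] at hakl
        rcases Nat.mod_two_eq_zero_or_one k with hk | hk
        · rw [(hy_even k hk).1, (hy_even (k + 2 * c) (by lia)).2, hakl]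
        · rw [(hy_odd k hk).1, (hy_odd (k + 2 * c) (by lia)).2, hakl]
  have : NeZero (2 * m) := ⟨by lia⟩
  have hsucc (z : ZMod (2 * m)) :
      (z.val + 1 < 2 * m ∧ (z + 1).val = z.val + 1) ∨ (z.val + 1 = 2 * m ∧ (z + 1).val = 0) := by
    have : Fact (1 < 2 * m) := ⟨by lia⟩
    have hz := ZMod.val_lt z
    rw [ZMod.val_add, ZMod.val_one]
    rcases Nat.lt_or_ge (z.val + 1) (2 * m) with hlt | hge
    · exact Or.inl ⟨hlt, Nat.mod_eq_of_lt hlt⟩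
    · have : z.val + 1 = 2 * m := by lia
      exact Or.inr ⟨this, by rw [this, Nat.mod_self]⟩
  refine ⟨m, hm, fun z => a (i + 1 + z.val), fun z => y (i + 1 + z.val), ?_, fun z => hFD (haF _),
    fun z => ?_, fun z => ?_⟩
  · intro z z' hzz
    apply ZMod.val_injective
    have hz := ZMod.val_lt z
    have hz' := ZMod.val_lt z'
    by_contra hne
    rcases lt_or_gt_of_ne hne with hlt | hlt
    · exact hinj _ _ (by lia) (by lia) hzz
    · exact hinj _ _ (by lia) (by lia) hzz.symm
  · rcases hsucc z with ⟨-, hz⟩ | ⟨hz, hz'⟩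
    · simp only [hz, ← add_assoc]
      rcases Nat.mod_two_eq_zero_or_one (i + 1 + z.val) with hk | hk
      · exact Or.inr ⟨(hy_even _ hk).1.symm, (hy_even _ hk).2.symm⟩
      · exact Or.inl ⟨(hy_odd _ hk).1.symm, (hy_odd _ hk).2.symm⟩
    · simp only [hz', add_zero]
      rw [show i + 1 + z.val = i + 2 * m by lia]
      rcases Nat.mod_two_eq_zero_or_one i with hk | hk
      · exact Or.inr ⟨(hy_even _ (by lia)).1.symm, by rw [← hi, (hy_even i hk).2]⟩
      · exact Or.inl ⟨(hy_odd _ (by lia)).1.symm, by rw [← hi, (hy_odd i hk).2]⟩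
  · rcases hsucc z with ⟨-, hz⟩ | ⟨hz, hz'⟩
    · simp only [hz, ← add_assoc]
      exact hy_ne _
    · simp only [hz', add_zero]
      rw [show i + 1 + z.val = i + 2 * m by lia, ← hi]
      exact hy_ne i

/-- An oriented graph without alternating closed trails splits into a part with out-degrees at most
one and a part with in-degrees at most one. -/
theorem exists_partition_injOn [DecidableEq α] {D : Finset (α × α)} (hD : Oriented D)
    (hT : ¬ HasAltTrail D) (F : Finset (α × α)) (hFD : F ⊆ D) :
    ∃ P Q : Finset (α × α), P ∪ Q = F ∧ Disjoint P Q ∧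
      (P : Set (α × α)).InjOn Prod.fst ∧ (Q : Set (α × α)).InjOn Prod.snd := by
  induction F using Finset.strongInduction with
  | H F ih =>
  rcases F.eq_empty_or_nonempty with rfl | hF
  · exact ⟨∅, ∅, by simp⟩
  obtain ⟨e, he, hdet⟩ := exists_arc_determined_by_endpoint hD hT hFD hF
  obtain ⟨P, Q, hPQ, hdisj, hP, hQ⟩ :=
    ih (F.erase e) (Finset.erase_ssubset he) ((Finset.erase_subset _ _).trans hFD)
  have hmem (x : α × α) : x ∈ P ∨ x ∈ Q ↔ x ≠ e ∧ x ∈ F := by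
    rw [← Finset.mem_union, hPQ, Finset.mem_erase]
  have heP : e ∉ P := fun h => ((hmem e).1 (Or.inl h)).1 rfl
  have heQ : e ∉ Q := fun h => ((hmem e).1 (Or.inr h)).1 rfl
  rcases hdet with hdet | hdet
  · refine ⟨insert e P, Q, ?_, ?_, ?_, hQ⟩
    · rw [Finset.insert_union, hPQ, Finset.insert_erase he]
    · exact Finset.disjoint_insert_left.2 ⟨heQ, hdisj⟩
    · rw [Finset.coe_insert, Set.injOn_insert (by simpa using heP)]
      refine ⟨hP, ?_⟩
      rintro ⟨x, hx, hxe⟩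
      have := (hmem x).1 (Or.inl hx)
      exact this.1 (hdet x this.2 hxe)
  · refine ⟨P, insert e Q, ?_, ?_, hP, ?_⟩
    · rw [Finset.union_insert, hPQ, Finset.insert_erase he]
    · exact Finset.disjoint_insert_right.2 ⟨heP, hdisj⟩
    · rw [Finset.coe_insert, Set.injOn_insert (by simpa using heQ)]
      refine ⟨hQ, ?_⟩
      rintro ⟨x, hx, hxe⟩
      have := (hmem x).1 (Or.inr hx)
      exact this.1 (hdet x this.2 hxe)

/-- In an oriented graph without alternating closed trails, a set of arcs is determined by its
out-degrees and in-degrees. -/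
theorem eq_of_outDeg_eq_of_inDeg_eq [DecidableEq α] {D : Finset (α × α)} (hD : Oriented D)
    (hT : ¬ HasAltTrail D) {S T : Finset (α × α)} (hS : S ⊆ D) (hTD : T ⊆ D)
    (hout : ∀ v, outDeg S v = outDeg T v) (hin : ∀ v, inDeg S v = inDeg T v) : S = T := by
  by_contra hne
  have hF : (symmDiff S T).Nonempty :=
    Finset.nonempty_iff_ne_empty.2 fun h => hne (symmDiff_eq_bot.1 h)
  have hFD : symmDiff S T ⊆ D := fun x hx => by
    rcases Finset.mem_symmDiff.1 hx with h | h
    exacts [hS h.1, hTD h.1]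
  have key (p : α × α → Prop) [DecidablePred p] (e : α × α) (he : e ∈ symmDiff S T) (hpe : p e)
      (hdet : ∀ x ∈ symmDiff S T, p x → x = e)
      (hcard : (S.filter p).card = (T.filter p).card) : False := by
    have hx (x : α × α) (hxe : x ≠ e) (hpx : p x) : x ∈ S ↔ x ∈ T := by
      by_contra hcon
      refine hxe (hdet x (Finset.mem_symmDiff.2 ?_) hpx)
      tauto
    rcases Finset.mem_symmDiff.1 he with ⟨h1, h2⟩ | ⟨h1, h2⟩
    · refine (Finset.card_lt_card (Finset.ssubset_iff_subset_ne.2 ⟨?_, ?_⟩)).ne' hcard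
      · intro x hxT
        rw [Finset.mem_filter] at hxT ⊢
        exact ⟨(hx x (by rintro rfl; exact h2 hxT.1) hxT.2).2 hxT.1, hxT.2⟩
      · intro h
        exact h2 (Finset.mem_filter.1 (h ▸ Finset.mem_filter.2 ⟨h1, hpe⟩)).1
    · refine (Finset.card_lt_card (Finset.ssubset_iff_subset_ne.2 ⟨?_, ?_⟩)).ne hcard
      · intro x hxS
        rw [Finset.mem_filter] at hxS ⊢
        exact ⟨(hx x (by rintro rfl; exact h2 hxS.1) hxS.2).1 hxS.1, hxS.2⟩
      · intro h
        exact h2 (Finset.mem_filter.1 (h ▸ Finset.mem_filter.2 ⟨h1, hpe⟩)).1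
  obtain ⟨e, he, hdet | hdet⟩ := exists_arc_determined_by_endpoint hD hT hFD hF
  · exact key (fun x => x.1 = e.1) e he rfl hdet (hout e.1)
  · exact key (fun x => x.2 = e.2) e he rfl hdet (hin e.2)

/-- A finite acyclic digraph has a strictly increasing vertex potential. -/
theorem exists_potential_of_not_hasDirCycle {D : Finset (α × α)} (hD : ¬ HasDirCycle D) :
    ∃ w : α → ℤ, ∀ a ∈ D, w a.1 < w a.2 := by
  classical
  let r : α → α → Prop := Relation.TransGen fun a b => (a, b) ∈ D
  refine ⟨fun v => (((D.image Prod.fst).filter fun u => r u v).card : ℤ), fun a ha => ?_⟩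
  have hr : r a.1 a.2 := Relation.TransGen.single ha
  refine Nat.cast_lt.2 (Finset.card_lt_card (Finset.ssubset_iff_of_subset ?_ |>.2 ⟨a.1, ?_, ?_⟩))
  · exact Finset.monotone_filter_right _ fun u _ hu => Relation.TransGen.trans hu hr
  · exact Finset.mem_filter.2 ⟨Finset.mem_image_of_mem _ ha, hr⟩
  · exact fun h => hD ⟨a.1, (Finset.mem_filter.1 h).2⟩

theorem sum_comp_eq_of_card_filter_eq {ι β : Type*} [DecidableEq β] (g : ι → β) {S T : Finset ι}
    (h : ∀ b, (S.filter fun a => g a = b).card = (T.filter fun a => g a = b).card) (f : β → ℤ) :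
    ∑ a ∈ S, f (g a) = ∑ a ∈ T, f (g a) := by
  have hmap : S.val.map g = T.val.map g := by
    ext b
    rw [Multiset.count_map, Multiset.count_map]
    simp only [eq_comm (a := b)]
    exact h b
  have hsum := congrArg (fun s => (s.map f).sum) hmap
  rw [Multiset.map_map, Multiset.map_map] at hsum
  exact hsum

/-- Digraphs with equal degrees have equal total increase of any vertex potential. -/
theorem sum_potential_sub_eq [DecidableEq α] {S T : Finset (α × α)}
    (hout : ∀ v, outDeg S v = outDeg T v) (hin : ∀ v, inDeg S v = inDeg T v) (w : α → ℤ) :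
    ∑ a ∈ S, (w a.2 - w a.1) = ∑ a ∈ T, (w a.2 - w a.1) := by
  rw [Finset.sum_sub_distrib, Finset.sum_sub_distrib,
    sum_comp_eq_of_card_filter_eq Prod.snd hin w, sum_comp_eq_of_card_filter_eq Prod.fst hout w]

/-- Sums of a symmetric function over two orientations of a graph agree. -/
theorem IsOrientation.sum_eq_sum {G : SimpleGraph α} {D D' : Finset (α × α)}
    (hD : IsOrientation G D) (hD' : IsOrientation G D') (f : α × α → ℤ)
    (hf : ∀ a, f a.swap = f a) : ∑ a ∈ D, f a = ∑ a ∈ D', f a := by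
  classical
  have hmem {E : Finset (α × α)} (hE : IsOrientation G E) {a : α × α} (ha : G.Adj a.1 a.2) :
      a ∈ E ↔ a.swap ∉ E := hE.2 a.1 a.2 ha
  have hmaps {E E' : Finset (α × α)} (hE : IsOrientation G E) (hE' : IsOrientation G E')
      {a : α × α} (ha : a ∈ E) :
      (if a ∈ E' then a else a.swap) ∈ E' ∧
        (if (if a ∈ E' then a else a.swap) ∈ E then (if a ∈ E' then a else a.swap)
          else (if a ∈ E' then a else a.swap).swap) = a := by
    have h1 := hmem hE (hE.1 a ha)
    have h2 := hmem hE' (hE.1 a ha)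
    by_cases h : a ∈ E'
    · simp [h, ha]
    · simp only [h, if_false, Prod.swap_swap]
      exact ⟨by tauto, if_neg (h1.1 ha)⟩
  refine Finset.sum_nbij' (fun a => if a ∈ D' then a else a.swap)
    (fun a => if a ∈ D then a else a.swap) (fun a ha => (hmaps hD hD' ha).1)
    (fun a ha => (hmaps hD' hD ha).1) (fun a ha => (hmaps hD hD' ha).2)
    (fun a ha => (hmaps hD' hD ha).2) fun a _ => ?_
  split_ifs
  exacts [rfl, (hf a).symm]

/-- Every Bernstein-orientable graph is UFP: it has a recoverable
configuration in which both colour classes have maximum out-degree at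
most `1`. -/
theorem stmt5 [DecidableEq α] (G : SimpleGraph α)
    (h : ∃ D : Finset (α × α), IsOrientation G D ∧ Bernstein D) :
    ∃ D R B : Finset (α × α), IsOrientation G D ∧ R ∪ B = D ∧ Disjoint R B ∧
      (∀ v : α, outDeg R v ≤ 1) ∧ (∀ v : α, outDeg B v ≤ 1) ∧
      ∀ D' R' B' : Finset (α × α), IsOrientation G D' → R' ∪ B' = D' →
        Disjoint R' B' →
        (∀ v : α, outDeg R' v = outDeg R v ∧ inDeg R' v = inDeg R v ∧
          outDeg B' v = outDeg B v ∧ inDeg B' v = inDeg B v) →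
        R' = R ∧ B' = B := by
  obtain ⟨D, hGD, hD, hC, hT⟩ := h
  obtain ⟨w, hw⟩ := exists_potential_of_not_hasDirCycle hC
  obtain ⟨P, Q, hPQ, hdisj, hP, hQ⟩ := exists_partition_injOn hD hT D subset_rfl
  have hPD : P ⊆ D := hPQ ▸ Finset.subset_union_left
  have hQD : Q ⊆ D := hPQ ▸ Finset.subset_union_right
  have hanti (a : α × α) (ha : a ∈ D) : a.swap ∉ D := (hD a ha).2
  have hB (a : α × α) : a ∈ Q.image Prod.swap ↔ a.swap ∈ Q := by
    refine ⟨fun ha => ?_, fun ha => Finset.mem_image.2 ⟨_, ha, Prod.swap_swap a⟩⟩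
    obtain ⟨q, hq, rfl⟩ := Finset.mem_image.1 ha
    simpa using hq
  have hor : IsOrientation G (P ∪ Q.image Prod.swap) := by
    have hmem (a : α × α) : a ∈ D ↔ a ∈ P ∨ a ∈ Q := by rw [← hPQ, Finset.mem_union]
    refine ⟨fun a ha => ?_, fun x y hxy => ?_⟩
    · rw [Finset.mem_union, hB] at ha
      rcases ha with ha | ha
      exacts [hGD.1 a (hPD ha), (hGD.1 _ (hQD ha)).symm]
    · have h1 := hGD.2 x y hxy
      have h2 := Finset.disjoint_left.1 hdisj
      have h3 := @h2 (x, y)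
      have h4 := @h2 (y, x)
      have h5 := hmem (x, y)
      have h6 := hmem (y, x)
      simp only [Finset.mem_union, hB, Prod.swap_prod_mk]
      tauto
  have hdisj' : Disjoint P (Q.image Prod.swap) :=
    Finset.disjoint_left.2 fun a ha hb => hanti a (hPD ha) (hQD ((hB a).1 hb))
  refine ⟨_, P, Q.image Prod.swap, hor, rfl, hdisj', fun v => ?_, fun v => ?_, ?_⟩
  · refine Finset.card_le_one.2 fun a ha b hb => ?_
    rw [Finset.mem_filter] at ha hb
    exact hP ha.1 hb.1 (ha.2.trans hb.2.symm)
  · refine Finset.card_le_one.2 fun a ha b hb => ?_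
    rw [Finset.mem_filter, hB] at ha hb
    exact Prod.swap_injective (hQ ha.1 hb.1 (ha.2.trans hb.2.symm))
  rintro D' R' B' hD' rfl hdisj'' hdeg
  have hsumR := sum_potential_sub_eq (fun v => (hdeg v).1) (fun v => (hdeg v).2.1) w
  have hsumB := sum_potential_sub_eq (fun v => (hdeg v).2.2.1) (fun v => (hdeg v).2.2.2) w
  have habs := hD'.sum_eq_sum hor (fun a => |w a.2 - w a.1|) fun a => abs_sub_comm _ _
  rw [Finset.sum_union hdisj'', Finset.sum_union hdisj'] at habs
  have habsP : ∑ a ∈ P, |w a.2 - w a.1| = ∑ a ∈ P, (w a.2 - w a.1) :=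
    Finset.sum_congr rfl fun a ha => abs_of_pos (sub_pos.2 (hw a (hPD ha)))
  have habsB : ∑ a ∈ Q.image Prod.swap, |w a.2 - w a.1| =
      -∑ a ∈ Q.image Prod.swap, (w a.2 - w a.1) := by
    rw [← Finset.sum_neg_distrib]
    exact Finset.sum_congr rfl fun a ha =>
      abs_of_neg (sub_neg.2 (hw _ (hQD ((hB a).1 ha))))
  have hnnR : ∀ a ∈ R', 0 ≤ |w a.2 - w a.1| - (w a.2 - w a.1) :=
    fun a _ => sub_nonneg.2 (le_abs_self _)
  have hnnB : ∀ a ∈ B', 0 ≤ |w a.2 - w a.1| + (w a.2 - w a.1) :=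
    fun a _ => by linarith [neg_le_abs (w a.2 - w a.1)]
  have hR0 := Finset.sum_nonneg hnnR
  have hB0 := Finset.sum_nonneg hnnB
  have hzero : ∑ a ∈ R', (|w a.2 - w a.1| - (w a.2 - w a.1)) +
      ∑ a ∈ B', (|w a.2 - w a.1| + (w a.2 - w a.1)) = 0 := by
    rw [Finset.sum_sub_distrib, Finset.sum_add_distrib]
    linarith
  have hcover (a : α × α) (ha : G.Adj a.1 a.2) : a ∈ D ↔ a.swap ∉ D := hGD.2 a.1 a.2 ha
  have hR'D : R' ⊆ D := fun a ha => by
    have h0 := (Finset.sum_eq_zero_iff_of_nonneg hnnR).1 (by linarith) a ha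
    refine (hcover a (hD'.1 a (Finset.mem_union_left _ ha))).2 fun hs => ?_
    have hlt : w a.2 < w a.1 := hw _ hs
    linarith [abs_nonneg (w a.2 - w a.1)]
  have hB'D : ∀ a ∈ B', a.swap ∈ D := fun a ha => by
    have h0 := (Finset.sum_eq_zero_iff_of_nonneg hnnB).1 (by linarith) a ha
    by_contra hs
    have hlt := hw _ ((hcover a (hD'.1 a (Finset.mem_union_right _ ha))).2 hs)
    linarith [abs_nonneg (w a.2 - w a.1)]
  have hRP : R' = P :=
    eq_of_outDeg_eq_of_inDeg_eq hD hT hR'D hPD (fun v => (hdeg v).1) fun v => (hdeg v).2.1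
  refine ⟨hRP, ?_⟩
  have hswap : B'.image Prod.swap = Q := by
    have hcard (p : α × α → Prop) [DecidablePred p] (S : Finset (α × α)) :
        ((S.image Prod.swap).filter p).card = (S.filter fun a => p a.swap).card := by
      rw [Finset.filter_image, Finset.card_image_of_injective _ Prod.swap_injective]
    refine eq_of_outDeg_eq_of_inDeg_eq hD hT (fun a ha => ?_) hQD (fun v => ?_) fun v => ?_
    · obtain ⟨b, hb, rfl⟩ := Finset.mem_image.1 ha
      exact hB'D b hb
    · have h1 := (hdeg v).2.2.2
      simp only [outDeg, inDeg, hcard, Prod.fst_swap, Prod.snd_swap] at h1 ⊢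
      exact h1
    · have h1 := (hdeg v).2.2.1
      simp only [outDeg, inDeg, hcard, Prod.fst_swap, Prod.snd_swap] at h1 ⊢
      exact h1
  rw [← hswap, Finset.image_image, Prod.swap_swap_eq, Finset.image_id]
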